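/- arXiv:2008.01669 — 4 statements merged into one kernel-verified Lean document; each statement's English description precedes it below -/
import Mathlib

section
/- Let G be a finite simple graph on n vertices with Laplacian matrix L, and let λ_1, ..., λ_n be the eigenvalues of L (with multiplicity) with λ_n = 0. For any column vector u = (u_1,...,u_n) in R^n, the characteristic polynomial of the matrix L + u·1_n^T satisfies det(L + u·1_n^T − λ I_n) = (λ_1 − λ)(λ_2 − λ)···(λ_{n−1} − λ)·((u_1 + ... + u_n) − λ) for all real λ. -/
/-!
Since `1ᵀ L = 0`, for `x ≠ 0` the perturbed matrix factors as
`L + u 1ᵀ - x I = (I - x⁻¹ u 1ᵀ) (L - x I)`. By the matrix determinant lemma the first factor has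
determinant `1 - x⁻¹ ∑ uᵢ`, while the second has determinant `∏ (λᵢ - x)`, in which the last
eigenvalue contributes `-x`; the product is the claimed value. Both sides are continuous in `x`,
so the case `x = 0` follows by density.
-/

open Matrix Polynomial

lemma det_sub_smul_one_of_charpoly {m : ℕ} (A : Matrix (Fin m) (Fin m) ℝ) (lam : Fin m → ℝ)
    (h : A.charpoly = ∏ i, (X - C (lam i))) (x : ℝ) :
    (A - x • (1 : Matrix (Fin m) (Fin m) ℝ)).det = ∏ i, (lam i - x) := by
  have h1 := congrArg (Polynomial.eval x) h
  rw [Matrix.eval_charpoly, Polynomial.eval_prod] at h1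
  have h2 : A - x • (1 : Matrix (Fin m) (Fin m) ℝ) = -(Matrix.scalar (Fin m) x - A) := by
    rw [neg_sub, Matrix.smul_one_eq_diagonal]
    rfl
  rw [h2, Matrix.det_neg, h1, Fintype.card, ← Finset.prod_const, ← Finset.prod_mul_distrib]
  exact Finset.prod_congr rfl fun i _ => by simp

/-- The all-ones row vector is a left null vector of the Laplacian. -/
lemma one_vecMul_lapMatrix {m : ℕ} (G : SimpleGraph (Fin m)) [DecidableRel G.Adj] :
    (fun _ => (1 : ℝ)) ᵥ* G.lapMatrix ℝ = 0 := by
  rw [← Matrix.mulVec_transpose, (G.isSymm_lapMatrix (R := ℝ)).eq]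
  exact G.lapMatrix_mulVec_const_eq_zero

lemma det_one_add_vecMulVec_ones {m : ℕ} (w : Fin m → ℝ) :
    (1 + vecMulVec w (fun _ => 1)).det = 1 + ∑ i, w i := by
  rw [Matrix.vecMulVec_eq Unit, Matrix.det_one_add_replicateCol_mul_replicateRow]
  simp [dotProduct]

/-- If `λ_1, …, λ_{n}` are the eigenvalues (with multiplicity) of the Laplacian
`L` of a graph on `n` vertices, with the last one equal to `0`, then for any vector `u`,
`det(L + u·1ᵀ − λI) = (λ_1 − λ)⋯(λ_{n−1} − λ)·((∑ u_i) − λ)` for all real `λ`. -/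
theorem charpoly_of_rank_one_perturbation (n : ℕ) (G : SimpleGraph (Fin (n + 1)))
    [DecidableRel G.Adj] (lam : Fin (n + 1) → ℝ)
    (hlam : (G.lapMatrix ℝ).charpoly = ∏ i, (X - C (lam i)))
    (hlast : lam (Fin.last n) = 0)
    (u : Fin (n + 1) → ℝ) (x : ℝ) :
    (G.lapMatrix ℝ + vecMulVec u (fun _ => 1)
        - x • (1 : Matrix (Fin (n + 1)) (Fin (n + 1)) ℝ)).det
      = (∏ i : Fin n, (lam i.castSucc - x)) * ((∑ i, u i) - x) := by
  revert x
  refine congrFun (Continuous.ext_on (dense_compl_singleton (0 : ℝ)) (by fun_prop)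
    (by fun_prop) fun x (hx : x ≠ 0) => ?_)
  have hfac : G.lapMatrix ℝ + vecMulVec u (fun _ => 1)
        - x • (1 : Matrix (Fin (n + 1)) (Fin (n + 1)) ℝ)
      = (1 + vecMulVec (-x⁻¹ • u) (fun _ => 1)) * (G.lapMatrix ℝ - x • 1) := by
    rw [add_mul, one_mul, mul_sub, Matrix.vecMulVec_mul, one_vecMul_lapMatrix, Matrix.mul_smul,
      mul_one, Matrix.vecMulVec_zero, Matrix.smul_vecMulVec, smul_smul, mul_neg, mul_inv_cancel₀ hx, neg_one_smul]
    abel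
  rw [hfac, Matrix.det_mul, det_one_add_vecMulVec_ones,
    det_sub_smul_one_of_charpoly _ lam hlam, Fin.prod_univ_castSucc, hlast]
  simp only [Pi.smul_apply, smul_eq_mul, ← Finset.mul_sum]
  field_simp
  ring
end

section
/- Let n_1, ..., n_p be positive integers, let G be the complete multipartite graph K_{n_1,...,n_p}, and let n = n_1 + ... + n_p. Then the characteristic polynomial of the Laplacian matrix of G satisfies det(L(G) − λ I_n) = −λ (n − λ)^{p−1} ∏_{i=1}^p (n − n_i − λ)^{n_i − 1} for all real λ. -/
open Matrix SimpleGraph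

/-!
Write `a i = n - n_i - x`, let `B` be the vertex-by-part incidence matrix and `J` the all-ones
matrix. Two vertices are non-adjacent exactly when they lie in the same part, so
`L(G) - x I = D + B (I - J) Bᵀ`, where `D` is diagonal with entry `a i` on the `i`-th part
(`lapMatrix_sub_smul_one_eq`). If no `a i` vanishes, the generalised matrix determinant lemma
reduces the determinant to a `p × p` one: it equals `∏ a_i ^ (n_i - 1)` times
`det (diag a + (I - J) diag n_i)`. Since `a_i + n_i = n - x` does not depend on `i`, the latter
matrix is the scalar `n - x` minus a rank-one matrix, and its determinant is
`(n - x) ^ (p - 1) * (n - x - ∑ n_i) = (n - x) ^ (p - 1) * (-x)` (`det_scalar_sub_vecMulVec`).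
Both sides are continuous in `x`, and only finitely many `x` make some `a i` vanish, so the
identity extends to every `x`.
-/

/-- The incidence matrix between vertices and parts of a complete multipartite graph: the entry
at `(u, i)` is `1` if the vertex `u` lies in the `i`-th part, and `0` otherwise. -/
def partMatrix {p : ℕ} (nv : Fin p → ℕ) : Matrix (Σ i : Fin p, Fin (nv i)) (Fin p) ℝ :=
  Matrix.of fun u i => if u.1 = i then 1 else 0

lemma degree_completeMultipartiteGraph_fin {p : ℕ} (nv : Fin p → ℕ)
    [DecidableRel (completeMultipartiteGraph (fun i : Fin p => Fin (nv i))).Adj]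
    (u : Σ i : Fin p, Fin (nv i)) :
    ((completeMultipartiteGraph (fun i : Fin p => Fin (nv i))).degree u : ℝ)
      = ((∑ i, nv i : ℕ) : ℝ) - nv u.1 := by
  rw [degree_eq_sum_if_adj]
  have h : ∀ v : Σ i : Fin p, Fin (nv i),
      (if (completeMultipartiteGraph (fun i : Fin p => Fin (nv i))).Adj u v then (1 : ℝ) else 0)
        = 1 - (if u.1 = v.1 then 1 else 0) := by
    intro v
    by_cases huv : u.1 = v.1 <;> simp [huv]
  simp_rw [h]
  rw [Fintype.sum_sigma]
  simp [apply_ite Finset.card]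

lemma lapMatrix_sub_smul_one_eq {p : ℕ} (nv : Fin p → ℕ)
    [DecidableRel (completeMultipartiteGraph (fun i : Fin p => Fin (nv i))).Adj] (x : ℝ) :
    (completeMultipartiteGraph (fun i : Fin p => Fin (nv i))).lapMatrix ℝ
        - x • (1 : Matrix (Σ i : Fin p, Fin (nv i)) (Σ i : Fin p, Fin (nv i)) ℝ)
      = Matrix.diagonal (fun u => ((∑ i, nv i : ℕ) : ℝ) - nv u.1 - x)
        + partMatrix nv * ((1 - vecMulVec 1 1 : Matrix (Fin p) (Fin p) ℝ) * (partMatrix nv)ᵀ) := by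
  ext u v
  have h : (partMatrix nv * ((1 - vecMulVec 1 1 : Matrix (Fin p) (Fin p) ℝ) * (partMatrix nv)ᵀ)) u v
      = (if u.1 = v.1 then 1 else 0) - 1 := by
    simp [partMatrix, Matrix.mul_apply, Matrix.one_apply]
  rw [Matrix.add_apply, h]
  simp only [lapMatrix, degMatrix, Matrix.sub_apply, Matrix.smul_apply, adjMatrix_apply,
    degree_completeMultipartiteGraph_fin, Matrix.diagonal_apply, Matrix.one_apply]
  by_cases huv : u = v
  · subst huv
    simp
  · by_cases h1 : u.1 = v.1 <;> simp [huv, h1]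

lemma det_scalar_sub_vecMulVec {p : ℕ} (hp : 0 < p) (u v : Fin p → ℝ) (c : ℝ) :
    (Matrix.scalar (Fin p) c - vecMulVec u v).det = c ^ (p - 1) * (c - u ⬝ᵥ v) := by
  rw [← Matrix.eval_charpoly, charpoly_vecMulVec]
  obtain ⟨q, rfl⟩ := Nat.exists_eq_succ_of_ne_zero hp.ne'
  simp [pow_succ]
  ring

/-- The determinant of the matrix in `lapMatrix_sub_smul_one_eq` when the diagonal part is
invertible, by the generalised matrix determinant lemma. -/
lemma det_diagonal_add_partMatrix {p : ℕ} (hp : 0 < p) (nv : Fin p → ℕ) (hnv : ∀ i, 0 < nv i)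
    (x : ℝ) (hx : ∀ i, ((∑ i, nv i : ℕ) : ℝ) - nv i - x ≠ 0) :
    (Matrix.diagonal (fun u : Σ i : Fin p, Fin (nv i) => ((∑ i, nv i : ℕ) : ℝ) - nv u.1 - x)
        + partMatrix nv * ((1 - vecMulVec 1 1 : Matrix (Fin p) (Fin p) ℝ) * (partMatrix nv)ᵀ)).det
      = -x * (((∑ i, nv i : ℕ) : ℝ) - x) ^ (p - 1)
          * ∏ i : Fin p, (((∑ i, nv i : ℕ) : ℝ) - (nv i : ℝ) - x) ^ (nv i - 1) := by
  set n : ℝ := ((∑ i, nv i : ℕ) : ℝ) with hn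
  set a : Fin p → ℝ := fun i => n - nv i - x with ha
  have hdet : (Matrix.diagonal (fun u : Σ i : Fin p, Fin (nv i) => a u.1)).det
      = (∏ i, a i ^ (nv i - 1)) * (Matrix.diagonal a).det := by
    rw [det_diagonal, det_diagonal, Fintype.prod_sigma, ← Finset.prod_mul_distrib]
    refine Finset.prod_congr rfl fun i _ => ?_
    rw [← pow_succ, Nat.sub_add_cancel (hnv i)]
    simp
  have hunit : IsUnit (Matrix.diagonal (fun u : Σ i : Fin p, Fin (nv i) => a u.1)).det := by
    rw [det_diagonal, isUnit_iff_ne_zero]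
    exact Finset.prod_ne_zero_iff.2 fun u _ => hx u.1
  have hinv : (Matrix.diagonal (fun u : Σ i : Fin p, Fin (nv i) => a u.1))⁻¹
      = Matrix.diagonal (fun u => (a u.1)⁻¹) := by
    refine Matrix.inv_eq_right_inv ?_
    rw [diagonal_mul_diagonal, ← diagonal_one]
    congr 1
    ext u
    exact mul_inv_cancel₀ (hx u.1)
  have hB : (partMatrix nv)ᵀ * Matrix.diagonal (fun u : Σ i : Fin p, Fin (nv i) => (a u.1)⁻¹)
      * partMatrix nv = Matrix.diagonal (fun i => (nv i : ℝ) * (a i)⁻¹) := by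
    ext i j
    rw [Matrix.mul_apply]
    simp only [mul_diagonal, Fintype.sum_sigma, partMatrix, transpose_apply, of_apply,
      diagonal_apply]
    by_cases hij : i = j
    · subst hij
      simp
    · simp [hij, Ne.symm hij]
  have hred : (1 + (1 - vecMulVec 1 1 : Matrix (Fin p) (Fin p) ℝ) * Matrix.diagonal (fun i => (nv i : ℝ) * (a i)⁻¹))
      * Matrix.diagonal a
      = Matrix.scalar (Fin p) (n - x) - vecMulVec 1 (fun i => (nv i : ℝ)) := by
    have hc : Matrix.diagonal (fun i => (nv i : ℝ) * (a i)⁻¹) * Matrix.diagonal a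
        = Matrix.diagonal (fun i => (nv i : ℝ)) := by
      rw [diagonal_mul_diagonal]
      congr 1
      ext i
      exact inv_mul_cancel_right₀ (hx i) _
    rw [add_mul, Matrix.mul_assoc, hc]
    ext i j
    by_cases hij : i = j
    · subst hij
      simp [ha]
      ring
    · simp [hij]
  rw [det_add_mul _ _ hunit, hinv, Matrix.mul_assoc, Matrix.mul_assoc, ← Matrix.mul_assoc _ᵀ, hB,
    hdet, mul_assoc, mul_comm (Matrix.diagonal a).det, ← det_mul, hred,
    det_scalar_sub_vecMulVec hp]
  have hs : (1 : Fin p → ℝ) ⬝ᵥ (fun i => (nv i : ℝ)) = n := by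
    simp [hn, dotProduct]
  rw [hs]
  ring

/-- The characteristic polynomial of the Laplacian of the complete
multipartite graph `K_{n_1,…,n_p}` with `n = n_1 + ⋯ + n_p`:
`det(L(G) − λI) = −λ(n − λ)^{p−1} ∏_{i=1}^p (n − n_i − λ)^{n_i−1}`. -/
theorem charpoly_complete_multipartite (p : ℕ) (hp : 0 < p) (nv : Fin p → ℕ)
    (hnv : ∀ i, 0 < nv i) (n : ℕ) (hn : n = ∑ i, nv i)
    [DecidableRel (completeMultipartiteGraph (fun i : Fin p => Fin (nv i))).Adj] (x : ℝ) :
    ((completeMultipartiteGraph (fun i : Fin p => Fin (nv i))).lapMatrix ℝ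
        - x • (1 : Matrix (Σ i : Fin p, Fin (nv i)) (Σ i : Fin p, Fin (nv i)) ℝ)).det
      = -x * ((n : ℝ) - x) ^ (p - 1)
          * ∏ i : Fin p, ((n : ℝ) - (nv i : ℝ) - x) ^ (nv i - 1) := by
  subst hn
  -- The values of `x` at which the diagonal part is singular form a finite set.
  have hdense : Dense (Set.range fun i : Fin p => ((∑ i, nv i : ℕ) : ℝ) - nv i)ᶜ :=
    (Set.finite_range _).countable.dense_compl ℝ
  refine congrFun (Continuous.ext_on hdense
    (f := fun x : ℝ => ((completeMultipartiteGraph (fun i : Fin p => Fin (nv i))).lapMatrix ℝ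
        - x • (1 : Matrix (Σ i : Fin p, Fin (nv i)) (Σ i : Fin p, Fin (nv i)) ℝ)).det)
    (g := fun x : ℝ => -x * (((∑ i, nv i : ℕ) : ℝ) - x) ^ (p - 1)
          * ∏ i : Fin p, (((∑ i, nv i : ℕ) : ℝ) - (nv i : ℝ) - x) ^ (nv i - 1))
    ?_ ?_ ?_) x
  · exact Continuous.matrix_det (by fun_prop)
  · fun_prop
  · intro y hy
    simp only
    rw [lapMatrix_sub_smul_one_eq]
    exact det_diagonal_add_partMatrix hp nv hnv y fun i h => hy ⟨i, sub_eq_zero.1 h⟩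
end

section
/- Let G be a threshold graph on n vertices, with vertices ordered according to its isolated–dominating construction sequence, with initial vertex 1, set of isolated vertices I(G), and set of dominating vertices D(G). Then the characteristic polynomial of the Laplacian matrix of G satisfies det(L(G) − λ I_n) = −λ · ∏_{j ∈ I(G)} (deg(j) − λ) · ∏_{j ∈ D(G)} (deg(j) + 1 − λ) for all real λ. -/
/-!
The Laplacian of a threshold graph has an explicit orthogonal eigenbasis depending only on the
number of vertices: the all-ones vector, with eigenvalue `0`, and for each `j ≠ 0` the vector
`e₀ + ⋯ + e_{j-1} - j • e_j`, with eigenvalue `deg j` if `j` is isolated and `deg j + 1` if `j` is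
dominating.  Indeed each such vector has coordinate sum `0`, so vertices after `j` do not see it;
and the vertices before `j` have the same neighbours as `j` among those after `j`.  With these
vectors as the columns of `P`, we get `(L - x) P = P diag (μ - x)` (`lap_mul_thresholdBasis`),
and `Pᵀ P` is diagonal with positive entries, so that `det P` can be cancelled
(`det_thresholdBasis_ne_zero`).
-/

open Matrix Finset

/-- The matrix whose column `0` is the all-ones vector and whose column `j ≠ 0` is
`e₀ + ⋯ + e_{j-1} - j • e_j`. -/
def thresholdBasis (n : ℕ) : Matrix (Fin (n + 1)) (Fin (n + 1)) ℝ :=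
  fun i j => if j = 0 then 1 else if i < j then 1 else if i = j then -(j : ℕ) else 0

lemma thresholdBasis_sum (n : ℕ) (j : Fin (n + 1)) (hj : j ≠ 0) :
    ∑ i, thresholdBasis n i j = 0 := by
  have h : ∀ i, thresholdBasis n i j
      = (if i < j then 1 else 0) - (if i = j then ((j : ℕ) : ℝ) else 0) := by
    intro i
    unfold thresholdBasis
    rw [if_neg hj]
    rcases lt_trichotomy i j with h | h | h
    · simp [h, h.ne]
    · simp [h]
    · simp [h.not_gt, h.ne']
  simp only [h, sum_sub_distrib, sum_ite_eq', mem_univ, if_true]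
  rw [sum_boole]
  have : (univ.filter (fun i => i < j)) = Finset.Iio j := by ext; simp
  rw [this, Fin.card_Iio]
  simp

lemma thresholdBasis_orthogonal (n : ℕ) {j k : Fin (n + 1)} (hjk : j < k) :
    ∑ i, thresholdBasis n i j * thresholdBasis n i k = 0 := by
  have hk : k ≠ 0 := (lt_of_le_of_lt (Fin.zero_le j) hjk).ne'
  by_cases hj : j = 0
  · rw [← thresholdBasis_sum n k hk]
    refine sum_congr rfl fun i _ => ?_
    simp [thresholdBasis, hj]
  · rw [← thresholdBasis_sum n j hj]
    refine sum_congr rfl fun i _ => ?_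
    -- column `j` is supported on `i ≤ j`, where column `k` is identically `1`
    rcases le_or_gt i j with h | h
    · simp [thresholdBasis, hk, h.trans_lt hjk]
    · simp [thresholdBasis, hj, h.not_gt, h.ne']

lemma det_thresholdBasis_ne_zero (n : ℕ) : (thresholdBasis n).det ≠ 0 := by
  have h : (thresholdBasis n)ᵀ * thresholdBasis n
      = diagonal fun j => ∑ i, thresholdBasis n i j * thresholdBasis n i j := by
    ext j k
    rw [mul_apply]
    simp only [transpose_apply]
    rcases lt_trichotomy j k with hjk | rfl | hjk
    · rw [diagonal_apply_ne _ hjk.ne, thresholdBasis_orthogonal n hjk]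
    · rw [diagonal_apply_eq]
    · rw [diagonal_apply_ne _ hjk.ne', ← thresholdBasis_orthogonal n hjk]
      exact sum_congr rfl fun i _ => mul_comm _ _
  have h2 := congrArg Matrix.det h
  rw [det_mul, det_transpose, det_diagonal] at h2
  intro h0
  rw [h0, zero_mul] at h2
  refine absurd h2.symm (prod_ne_zero_iff.mpr fun j _ => ?_)
  refine (sum_pos' (fun i _ => mul_self_nonneg _) ⟨j, mem_univ _, ?_⟩).ne'
  refine mul_self_pos.mpr ?_
  by_cases hj : j = 0
  · simp [thresholdBasis, hj]
  · simp [thresholdBasis, hj]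

/-- The columns of `thresholdBasis` are eigenvectors of the Laplacian. -/
lemma lap_mul_thresholdBasis (n : ℕ) (G : SimpleGraph (Fin (n + 1)))
    [DecidableRel G.Adj] (D : Finset (Fin (n + 1)))
    (hadj : ∀ i j : Fin (n + 1), i < j → (G.Adj i j ↔ j ∈ D)) :
    G.lapMatrix ℝ * thresholdBasis n = thresholdBasis n *
      diagonal fun j => if j = 0 then 0 else (G.degree j : ℝ) + if j ∈ D then 1 else 0 := by
  have hdeg : ∀ k, (G.degree k : ℝ) = ∑ i, if G.Adj k i then (1 : ℝ) else 0 := by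
    intro k
    rw [sum_boole, ← G.card_neighborFinset_eq_degree, G.neighborFinset_eq_filter]
  ext k j
  rw [mul_diagonal]
  have hL : (G.lapMatrix ℝ * thresholdBasis n) k j = ∑ i, (if G.Adj k i then (1 : ℝ) else 0)
      * (thresholdBasis n k j - thresholdBasis n i j) := by
    rw [SimpleGraph.lapMatrix, Matrix.sub_mul, Matrix.sub_apply, SimpleGraph.degMatrix,
      diagonal_mul, mul_apply, hdeg]
    simp only [mul_sub, sum_sub_distrib, sum_mul, SimpleGraph.adjMatrix_apply]
  rw [hL]
  by_cases hj : j = 0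
  · simp [thresholdBasis, hj]
  rw [if_neg hj]
  have hs := thresholdBasis_sum n j hj
  set d : ℝ := if j ∈ D then 1 else 0 with hd
  have hlow : ∀ i, i < j → (if G.Adj j i then (1 : ℝ) else 0) = d := by
    intro i hi
    simp only [hd, G.adj_comm j i, hadj i j hi]
  rcases lt_trichotomy k j with hk | rfl | hk
  · have hP : thresholdBasis n k j = 1 := by simp [thresholdBasis, hk]
    -- rows `k` and `j` of the adjacency matrix differ only at positions `i ≤ j`
    have : ∀ i, (if G.Adj k i then (1 : ℝ) else 0) * (1 - thresholdBasis n i j)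
        = (if G.Adj j i then (1 : ℝ) else 0)
          + d * ((if i = j then 1 else 0) - thresholdBasis n i j) := by
      intro i
      rcases lt_trichotomy i j with h | rfl | h
      · rw [hlow i h]
        simp [thresholdBasis, h, h.ne]
      · simp only [hadj k i hk, ← hd]
        simp
      · simp only [hadj k i (hk.trans h), hadj j i h]
        simp [thresholdBasis, hj, h.not_gt, h.ne']
    rw [hP]
    simp only [this, sum_add_distrib, ← mul_sum, sum_sub_distrib, hs, ← hdeg]
    simp
  · have : ∀ i, (if G.Adj k i then (1 : ℝ) else 0)
          * (thresholdBasis n k k - thresholdBasis n i k)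
        = thresholdBasis n k k * (if G.Adj k i then (1 : ℝ) else 0)
          - d * (thresholdBasis n i k - if i = k then thresholdBasis n k k else 0) := by
      intro i
      rcases lt_trichotomy i k with h | rfl | h
      · rw [hlow i h]
        simp [thresholdBasis, hj, h, h.ne]
        ring
      · simp
      · simp [thresholdBasis, hj, h.not_gt, h.ne', mul_comm]
    simp only [this, sum_sub_distrib, ← mul_sum, hs, ← hdeg]
    simp
    ring
  · have : ∀ i, (if G.Adj k i then (1 : ℝ) else 0)
          * (thresholdBasis n k j - thresholdBasis n i j)
        = -(if k ∈ D then (1 : ℝ) else 0) * thresholdBasis n i j := by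
      intro i
      have hP : thresholdBasis n k j = 0 := by
        simp [thresholdBasis, hj, hk.not_gt, hk.ne']
      rcases le_or_gt i j with h | h
      · simp only [G.adj_comm k i, hadj i k (h.trans_lt hk), hP]
        ring
      · simp [thresholdBasis, hj, h.not_gt, h.ne', hk.not_gt, hk.ne']
    simp only [this, ← mul_sum, hs]
    simp [thresholdBasis, hj, hk.not_gt, hk.ne']

/-- Let `G` be a threshold graph on `n ≥ 1` vertices, ordered by its
isolated–dominating construction sequence: the initial vertex is `0`, `D` is the set of
dominating vertices, the isolated vertices are the non-initial vertices not in `D`, and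
for `i < j`, `i` and `j` are adjacent iff `j ∈ D`.  Then
`det(L(G) − λI) = −λ · ∏_{j isolated} (deg j − λ) · ∏_{j ∈ D} (deg j + 1 − λ)`. -/
theorem charpoly_threshold_graph (n : ℕ) (G : SimpleGraph (Fin (n + 1)))
    [DecidableRel G.Adj] (D : Finset (Fin (n + 1))) (hD0 : (0 : Fin (n + 1)) ∉ D)
    (hadj : ∀ i j : Fin (n + 1), i < j → (G.Adj i j ↔ j ∈ D)) (x : ℝ) :
    (G.lapMatrix ℝ - x • (1 : Matrix (Fin (n + 1)) (Fin (n + 1)) ℝ)).det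
      = -x * (∏ j ∈ univ.filter (fun j => j ≠ 0 ∧ j ∉ D), ((G.degree j : ℝ) - x))
           * (∏ j ∈ D, ((G.degree j : ℝ) + 1 - x)) := by
  set μ : Fin (n + 1) → ℝ :=
    fun j => if j = 0 then 0 else (G.degree j : ℝ) + if j ∈ D then 1 else 0 with hμ
  have hmul : (G.lapMatrix ℝ - x • (1 : Matrix (Fin (n + 1)) (Fin (n + 1)) ℝ)) * thresholdBasis n
      = thresholdBasis n * diagonal fun j => μ j - x := by
    have hdiag : (diagonal fun j => μ j - x)
        = diagonal μ - x • (1 : Matrix (Fin (n + 1)) (Fin (n + 1)) ℝ) := by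
      rw [smul_one_eq_diagonal, diagonal_sub]
    rw [hdiag, Matrix.sub_mul, Matrix.mul_sub, lap_mul_thresholdBasis n G D hadj]
    simp [hμ]
  have hdet := congrArg Matrix.det hmul
  rw [det_mul, det_mul, det_diagonal, mul_comm] at hdet
  rw [mul_left_cancel₀ (det_thresholdBasis_ne_zero n) hdet]
  rw [← prod_filter_mul_prod_filter_not univ (fun j => j ∈ D), mul_comm]
  congr 1
  · have h0 : univ.filter (fun j => j ∉ D)
        = insert 0 (univ.filter (fun j => j ≠ 0 ∧ j ∉ D)) := by
      ext j
      by_cases hj : j = 0 <;> simp [hj, hD0]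
    rw [h0, prod_insert (by simp)]
    congr 1
    · simp [hμ]
    · refine prod_congr rfl fun j hj => ?_
      simp only [mem_filter, mem_univ, true_and] at hj
      simp [hμ, hj.1, hj.2]
  · rw [filter_mem_eq_inter, univ_inter]
    refine prod_congr rfl fun j hj => ?_
    have : j ≠ 0 := fun h => hD0 (h ▸ hj)
    simp [hμ, this, hj]
end

section
/- Let G be a threshold graph on n vertices, with vertices ordered according to its isolated–dominating construction sequence, with initial vertex 1, set of isolated vertices I(G), and set of dominating vertices D(G). Let u ∈ R^n be the indicator vector of D(G). Then the matrix L(G) + u·1_n^T is upper triangular, its diagonal entry at position j equals deg(j) + 1 if j ∈ D(G) and deg(j) otherwise, and the sum of the entries of u equals deg(1). -/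
open Matrix Finset

/-- Let `G` be a threshold graph on `n ≥ 1` vertices, ordered by its
isolated–dominating construction sequence: the initial vertex is `0`, `D` is the set of
dominating vertices, and for `i < j`, `i` and `j` are adjacent iff `j ∈ D`.  Let `u` be the
indicator vector of `D`.  Then `L(G) + u·1ᵀ` is upper triangular, its diagonal entry at `j`
is `deg j + 1` if `j ∈ D` and `deg j` otherwise, and the entries of `u` sum to `deg 0`. -/
theorem threshold_rank_one_perturbation_triangular (n : ℕ) (G : SimpleGraph (Fin (n + 1)))
    [DecidableRel G.Adj] (D : Finset (Fin (n + 1))) (hD0 : (0 : Fin (n + 1)) ∉ D)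
    (hadj : ∀ i j : Fin (n + 1), i < j → (G.Adj i j ↔ j ∈ D))
    (u : Fin (n + 1) → ℝ) (hu : u = fun j => if j ∈ D then 1 else 0)
    (M : Matrix (Fin (n + 1)) (Fin (n + 1)) ℝ)
    (hM : M = G.lapMatrix ℝ + vecMulVec u (fun _ => 1)) :
    (∀ i j : Fin (n + 1), j < i → M i j = 0) ∧
    (∀ j : Fin (n + 1), M j j
        = if j ∈ D then (G.degree j : ℝ) + 1 else (G.degree j : ℝ)) ∧
    (∑ i, u i) = (G.degree 0 : ℝ) := by
  subst hu hM
  refine ⟨fun i j hji => ?_, fun j => ?_, ?_⟩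
  · -- Below the diagonal, `-1` from the Laplacian cancels `u i` exactly when `i` is dominating.
    have h : G.Adj i j ↔ i ∈ D := G.adj_comm i j |>.trans (hadj j i hji)
    by_cases hi : i ∈ D <;>
      simp [SimpleGraph.lapMatrix, SimpleGraph.degMatrix, vecMulVec_apply, hji.ne', h, hi]
  · by_cases hj : j ∈ D <;>
      simp [SimpleGraph.lapMatrix, SimpleGraph.degMatrix, vecMulVec_apply, hj]
  · have hN : G.neighborFinset 0 = D := by
      ext j
      rw [SimpleGraph.mem_neighborFinset]
      rcases eq_or_ne j 0 with rfl | hj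
      · simp [hD0]
      · exact hadj 0 j (Fin.pos_iff_ne_zero.mpr hj)
    simp [← SimpleGraph.card_neighborFinset_eq_degree, hN]
end
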